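/- Let ν̄ = (ν¹,…,ν^N) be an N-dimensional parametric b-measure on ℝ^N with common m-bounds {m_j}_{j≥1} and common Lipschitz l-bounds {l_j}_{j≥1}, and let (t₀, y₀) ∈ ℝ × ℝ^N. Then there exists a maximal open interval I = (α, β) containing t₀ and a continuous function y : I → ℝ^N which is the unique solution of the integral equation y_i(t) = y_{0,i} + ∫_{t₀}^t dν^i_{y(s)} (i = 1,…,N) on I, in the sense that any continuous solution on an interval containing t₀ is a restriction of y. Moreover, if β < ∞ then |y(t)| → ∞ as t → β⁻, and if α > −∞ then |y(t)| → ∞ as t → α⁺. -/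

import Mathlib

open MeasureTheory Set Filter Topology

/-- A (continuous real) b-measure: a set function on the bounded Borel subsets of `ℝ`
which vanishes on `∅`, is countably additive over countable pairwise disjoint families
of bounded Borel sets with bounded union, and vanishes on singletons. -/
structure IsBMeasure (μ : Set ℝ → ℝ) : Prop where
  empty : μ ∅ = 0
  countably_additive : ∀ A : ℕ → Set ℝ, (∀ n, MeasurableSet (A n)) →
    (∀ n, Bornology.IsBounded (A n)) → Pairwise (Function.onFun Disjoint A) →
    Bornology.IsBounded (⋃ n, A n) →
    HasSum (fun n => μ (A n)) (μ (⋃ n, A n))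
  singleton : ∀ t : ℝ, μ {t} = 0

/-- A locally finite atomless Borel measure on `ℝ`. -/
def GoodMeasure (m : Measure ℝ) : Prop :=
  IsLocallyFiniteMeasure m ∧ ∀ t : ℝ, m {t} = 0

/-- `P` is a finite Borel partition of `A`. -/
def IsBorelPartition (A : Set ℝ) {n : ℕ} (P : Fin n → Set ℝ) : Prop :=
  (∀ i, MeasurableSet (P i)) ∧ Pairwise (Function.onFun Disjoint P) ∧ (⋃ i, P i) = A

/-- `|μ| ≤ m` : total-variation bound of the set function `μ` by the measure `m`,
expressed through finite Borel partitions of bounded Borel sets. -/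
def TVLE (μ : Set ℝ → ℝ) (m : Measure ℝ) : Prop :=
  ∀ A : Set ℝ, Bornology.IsBounded A → MeasurableSet A →
    ∀ (n : ℕ) (P : Fin n → Set ℝ), IsBorelPartition A P →
      ∑ i, |μ (P i)| ≤ (m A).toReal

/-- Partition-sum bound `Σ |μ₁(Aᵢ) - μ₂(Aᵢ)| ≤ c · l(A)` for the difference of two
set functions, over finite Borel partitions of bounded Borel sets. -/
def DiffLE (μ₁ μ₂ : Set ℝ → ℝ) (c : ℝ) (l : Measure ℝ) : Prop :=
  ∀ A : Set ℝ, Bornology.IsBounded A → MeasurableSet A →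
    ∀ (n : ℕ) (P : Fin n → Set ℝ), IsBorelPartition A P →
      ∑ i, |μ₁ (P i) - μ₂ (P i)| ≤ c * (l A).toReal

variable {E : Type*} [NormedAddCommGroup E]

/-- `m` is an m-bound of `ν` on the closed ball of radius `j`. -/
def HasMBound (ν : E → Set ℝ → ℝ) (j : ℕ) (m : Measure ℝ) : Prop :=
  GoodMeasure m ∧ ∀ y : E, ‖y‖ ≤ (j : ℝ) → TVLE (ν y) m

/-- `l` is an l-bound of `ν` on the closed ball of radius `j`, for the modulus `ω`. -/
def HasLBound (ω : ℝ → ℝ) (ν : E → Set ℝ → ℝ) (j : ℕ) (l : Measure ℝ) : Prop :=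
  GoodMeasure l ∧ ∀ y₁ y₂ : E, ‖y₁‖ ≤ (j : ℝ) → ‖y₂‖ ≤ (j : ℝ) →
    DiffLE (ν y₁) (ν y₂) (ω ‖y₁ - y₂‖) l

/-- A non-decreasing family of moduli of continuity `{ω_j}`. -/
structure IsModulusFamily (ω : ℕ → ℝ → ℝ) : Prop where
  continuousOn : ∀ j, ContinuousOn (ω j) (Ici 0)
  monotoneOn : ∀ j, MonotoneOn (ω j) (Ici 0)
  map_zero : ∀ j, ω j 0 = 0
  nonneg : ∀ j x, 0 ≤ x → 0 ≤ ω j x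
  mono_index : ∀ j x, 0 ≤ x → ω j x ≤ ω (j + 1) x

/-- A parametric b-measure on `E` with respect to the family of moduli `ω`. -/
def IsParamBMeasure (ω : ℕ → ℝ → ℝ) (ν : E → Set ℝ → ℝ) : Prop :=
  (∀ y, IsBMeasure (ν y)) ∧
    ∀ j : ℕ, 1 ≤ j → ∃ m l : Measure ℝ, HasMBound ν j m ∧ HasLBound (ω j) ν j l

/-- A tagged partition of `[a,b]`. -/
structure TaggedPartition (a b : ℝ) where
  k : ℕ
  k_pos : 0 < k
  t : ℕ → ℝ
  tag : ℕ → ℝ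
  left : t 0 = a
  right : t k = b
  lt : ∀ i < k, t i < t (i + 1)
  tag_mem : ∀ i < k, tag i ∈ Set.Icc (t i) (t (i + 1))

/-- The mesh of the tagged partition is `< δ`. -/
def TaggedPartition.MeshLT {a b : ℝ} (P : TaggedPartition a b) (δ : ℝ) : Prop :=
  ∀ i < P.k, P.t (i + 1) - P.t i < δ

/-- The Riemann sum of the parametric b-measure `ν` along the curve `y` over the
tagged partition `P`. -/
def RiemannSum (ν : E → Set ℝ → ℝ) (y : ℝ → E) {a b : ℝ} (P : TaggedPartition a b) : ℝ :=
  ∑ i ∈ Finset.range P.k, ν (y (P.tag i)) (Set.Icc (P.t i) (P.t (i + 1)))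

/-- `L = ∫_a^b dν_{y(s)}` : `L` is the limit of the Riemann sums of `ν` along `y`
over tagged partitions of `[a,b]` as the mesh tends to `0`. -/
def IsCurveIntegral (ν : E → Set ℝ → ℝ) (y : ℝ → E) (a b : ℝ) (L : ℝ) : Prop :=
  ∀ ε > 0, ∃ δ > 0, ∀ P : TaggedPartition a b, P.MeshLT δ → |L - RiemannSum ν y P| < ε

/-- A suitable set of moduli of continuity `Θ = {θ_j^{[q₁,q₂]}}`. -/
structure IsSuitableModuli (Θ : ℕ → ℚ → ℚ → ℝ → ℝ) : Prop where
  continuousOn : ∀ (j : ℕ) (q₁ q₂ : ℚ), q₁ < q₂ → ContinuousOn (Θ j q₁ q₂) (Ici 0)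
  monotoneOn : ∀ (j : ℕ) (q₁ q₂ : ℚ), q₁ < q₂ → MonotoneOn (Θ j q₁ q₂) (Ici 0)
  map_zero : ∀ (j : ℕ) (q₁ q₂ : ℚ), q₁ < q₂ → Θ j q₁ q₂ 0 = 0
  nonneg : ∀ (j : ℕ) (q₁ q₂ : ℚ) (x : ℝ), q₁ < q₂ → 0 ≤ x → 0 ≤ Θ j q₁ q₂ x
  mono : ∀ (j₁ j₂ : ℕ) (q₁ q₂ p₁ p₂ : ℚ), j₁ ≤ j₂ → q₁ ≤ p₁ → p₁ < p₂ → p₂ ≤ q₂ →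
    ∀ x : ℝ, 0 ≤ x → Θ j₁ p₁ p₂ x ≤ Θ j₂ q₁ q₂ x

/-- The set `𝒦_j^I` of continuous functions `y : I → E`, `I = [q₁,q₂]`, bounded by `j`
and admitting `θ_j^I` as modulus of continuity. -/
def KSet (E : Type*) [NormedAddCommGroup E] (Θ : ℕ → ℚ → ℚ → ℝ → ℝ)
    (j : ℕ) (q₁ q₂ : ℚ) : Set (ℝ → E) :=
  {y | ContinuousOn y (Set.Icc (q₁ : ℝ) (q₂ : ℝ)) ∧
    (∀ t ∈ Set.Icc (q₁ : ℝ) (q₂ : ℝ), ‖y t‖ ≤ (j : ℝ)) ∧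
    ∀ t₁ ∈ Set.Icc (q₁ : ℝ) (q₂ : ℝ), ∀ t₂ ∈ Set.Icc (q₁ : ℝ) (q₂ : ℝ),
      ‖y t₁ - y t₂‖ ≤ Θ j q₁ q₂ |t₁ - t₂|}

/-- Convergence `ν_n → ν₀` in the topology `σ_Θ` : the integrals along curves of
`𝒦_j^I` converge uniformly, for every `j` and every compact interval `I` with
rational endpoints. -/
def SigmaThetaTendsto {E : Type*} [NormedAddCommGroup E] (Θ : ℕ → ℚ → ℚ → ℝ → ℝ)
    (ν : ℕ → E → Set ℝ → ℝ) (ν₀ : E → Set ℝ → ℝ) : Prop :=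
  ∀ (j : ℕ) (q₁ q₂ : ℚ), q₁ < q₂ → ∀ ε > 0, ∃ n₀ : ℕ, ∀ n ≥ n₀,
    ∀ y ∈ KSet E Θ j q₁ q₂, ∀ L L₀ : ℝ,
      IsCurveIntegral (ν n) y (q₁ : ℝ) (q₂ : ℝ) L →
      IsCurveIntegral ν₀ y (q₁ : ℝ) (q₂ : ℝ) L₀ → |L - L₀| < ε

/-- The time-translate `ν·t` of a parametric b-measure: `(ν·t)_y(A) = ν_y(A + t)`. -/
def BTranslate (ν : E → Set ℝ → ℝ) (t : ℝ) : E → Set ℝ → ℝ :=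
  fun y A => ν y ((fun s => s + t) '' A)

/-- The time-translate `m·t` of a Borel measure: `(m·t)(A) = m(A + t)`. -/
noncomputable def MTranslate (m : Measure ℝ) (t : ℝ) : Measure ℝ :=
  Measure.map (fun s => s - t) m

/-- An N-dimensional parametric b-measure on `E` with common m-bounds `m j` and
common Lipschitz l-bounds `l j`. -/
def IsNDimParamBMeasure {M : ℕ} (νbar : Fin M → E → Set ℝ → ℝ)
    (m l : ℕ → Measure ℝ) : Prop :=
  (∀ i y, IsBMeasure (νbar i y)) ∧
    ∀ j : ℕ, 1 ≤ j → GoodMeasure (m j) ∧ GoodMeasure (l j) ∧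
      (∀ i, ∀ y : E, ‖y‖ ≤ (j : ℝ) → TVLE (νbar i y) (m j)) ∧
      (∀ i, ∀ y₁ y₂ : E, ‖y₁‖ ≤ (j : ℝ) → ‖y₂‖ ≤ (j : ℝ) →
        DiffLE (νbar i y₁) (νbar i y₂) ‖y₁ - y₂‖ (l j))

/-- The oriented curve integral: `∫_b^a := -∫_a^b`. -/
def IsSignedCurveIntegral (ν : E → Set ℝ → ℝ) (y : ℝ → E) (a b : ℝ) (L : ℝ) : Prop :=
  (a ≤ b ∧ IsCurveIntegral ν y a b L) ∨ (b < a ∧ IsCurveIntegral ν y b a (-L))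

/-- `y` is a solution on `S` of the Cauchy problem `y' = ν̄_y`, `y(t₀) = y₀`, for the
N-dimensional parametric b-measure `ν̄`: componentwise,
`y_i(t) = y_{0,i} + ∫_{t₀}^t dν^i_{y(s)}`. -/
def IsSolutionOn {M : ℕ} (νbar : Fin M → EuclideanSpace ℝ (Fin M) → Set ℝ → ℝ)
    (t₀ : ℝ) (y₀ : EuclideanSpace ℝ (Fin M)) (S : Set ℝ)
    (y : ℝ → EuclideanSpace ℝ (Fin M)) : Prop :=
  t₀ ∈ S ∧ y t₀ = y₀ ∧ ContinuousOn y S ∧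
    ∀ t ∈ S, ∀ i : Fin M, IsSignedCurveIntegral (νbar i) y t₀ t (y t i - y₀ i)

/-- `y` is the maximal (noncontinuable) solution, defined on the open interval `S`:
every solution on an interval containing `t₀` is a restriction of `y`. -/
def IsMaximalSolution {M : ℕ} (νbar : Fin M → EuclideanSpace ℝ (Fin M) → Set ℝ → ℝ)
    (t₀ : ℝ) (y₀ : EuclideanSpace ℝ (Fin M)) (S : Set ℝ)
    (y : ℝ → EuclideanSpace ℝ (Fin M)) : Prop :=
  IsSolutionOn νbar t₀ y₀ S y ∧ IsOpen S ∧ S.OrdConnected ∧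
    ∀ S' : Set ℝ, S'.OrdConnected → ∀ z, IsSolutionOn νbar t₀ y₀ S' z →
      S' ⊆ S ∧ Set.EqOn z y S'


/-! ### Abstract part: generalized differential equations -/

structure Gen {V : Type*} [NormedAddCommGroup V] (F : V → ℝ → V) (G : ℕ → ℝ → ℝ) : Prop where
  mono : ∀ j, 1 ≤ j → Monotone (G j)
  cont : ∀ j, 1 ≤ j → Continuous (G j)
  b1 : ∀ j : ℕ, 1 ≤ j → ∀ v, ‖v‖ ≤ (j : ℝ) → ∀ s t, s ≤ t → ‖F v t - F v s‖ ≤ G j t - G j s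
  b2 : ∀ j : ℕ, 1 ≤ j → ∀ v w, ‖v‖ ≤ (j : ℝ) → ‖w‖ ≤ (j : ℝ) → ∀ s t, s ≤ t →
    ‖(F v t - F v s) - (F w t - F w s)‖ ≤ ‖v - w‖ * (G j t - G j s)

def GS {V : Type*} [NormedAddCommGroup V] (F : V → ℝ → V) (G : ℕ → ℝ → ℝ)
    (y : ℝ → V) (S : Set ℝ) : Prop :=
  ContinuousOn y S ∧ ∀ j : ℕ, 1 ≤ j → ∀ s ∈ S, ∀ t ∈ S, s ≤ t → ∀ v : V, ‖v‖ ≤ (j : ℝ) →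
    ∀ ω : ℝ, (∀ r ∈ Set.Icc s t, ‖y r‖ ≤ (j : ℝ) ∧ ‖y r - v‖ ≤ ω) →
      ‖y t - y s - (F v t - F v s)‖ ≤ ω * (G j t - G j s)

lemma chain_aux {a b δ : ℝ} (hab : a ≤ b) (hδ : 0 < δ) (Q : ℝ → Prop) (h0 : Q a)
    (hs : ∀ c c', a ≤ c → c ≤ c' → c' ≤ b → c' ≤ c + δ → Q c → Q c') : Q b := by
  have key : ∀ n : ℕ, Q (min b (a + n * δ)) := by
    intro n
    induction n with
    | zero => simpa [hab] using h0
    | succ n ih =>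
      have hn : (0 : ℝ) ≤ n * δ := by positivity
      have e : a + ((n + 1 : ℕ) : ℝ) * δ = a + n * δ + δ := by push_cast; ring
      refine hs _ _ ?_ ?_ (min_le_left _ _) ?_ ih
      · exact le_min hab (by linarith)
      · rw [e]; exact min_le_min le_rfl (by linarith)
      · rw [e]
        rcases le_total b (a + n * δ) with h | h
        · rw [min_eq_left h]; exact (min_le_left _ _).trans (by linarith)
        · rw [min_eq_right h]; exact min_le_right _ _
  obtain ⟨n, hn⟩ := exists_nat_ge ((b - a) / δ)
  have := key n
  rw [div_le_iff₀ hδ] at hn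
  rwa [min_eq_left (by linarith)] at this

lemma chain_bound {V : Type*} [NormedAddCommGroup V] (f : ℝ → V) (K : ℝ → ℝ) {s t δ : ℝ}
    (hst : s ≤ t) (hδ : 0 < δ)
    (h : ∀ c c', s ≤ c → c ≤ c' → c' ≤ t → c' ≤ c + δ → ‖f c' - f c‖ ≤ K c' - K c) :
    ‖f t - f s‖ ≤ K t - K s := by
  refine chain_aux hst hδ (fun r => ‖f r - f s‖ ≤ K r - K s) (by simp) ?_
  intro c c' h1 h2 h3 h4 h5
  have := h c c' h1 h2 h3 h4
  have e : f c' - f s = (f c' - f c) + (f c - f s) := by abel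
  rw [e]
  refine (norm_add_le _ _).trans ?_
  linarith

lemma unif_aux {V : Type*} [NormedAddCommGroup V] {f : ℝ → V} {a b η : ℝ}
    (hf : ContinuousOn f (Set.Icc a b)) (hη : 0 < η) :
    ∃ δ > 0, ∀ s ∈ Set.Icc a b, ∀ t ∈ Set.Icc a b, |s - t| ≤ δ → ‖f s - f t‖ < η := by
  have := isCompact_Icc.uniformContinuousOn_of_continuous hf
  rw [Metric.uniformContinuousOn_iff] at this
  obtain ⟨δ, hδ, h⟩ := this η hη
  refine ⟨δ / 2, by positivity, fun s hs t ht hst => ?_⟩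
  rw [← dist_eq_norm]
  exact h s hs t ht (by rw [Real.dist_eq]; linarith)

section
variable {V : Type*} [NormedAddCommGroup V] {F : V → ℝ → V} {G : ℕ → ℝ → ℝ}

lemma GS.mono {y : ℝ → V} {S T : Set ℝ} (h : GS F G y S) (hT : T ⊆ S) : GS F G y T :=
  ⟨h.1.mono hT, fun j hj s hs t ht => h.2 j hj s (hT hs) t (hT ht)⟩

lemma GS.congr {y z : ℝ → V} {a b : ℝ} (h : GS F G y (Set.Icc a b))
    (e : Set.EqOn z y (Set.Icc a b)) : GS F G z (Set.Icc a b) := by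
  refine ⟨h.1.congr e, fun j hj s hs t ht hst v hv ω hω => ?_⟩
  rw [e hs, e ht]
  refine h.2 j hj s hs t ht hst v hv ω fun r hr => ?_
  rw [← e ⟨hs.1.trans hr.1, hr.2.trans ht.2⟩]
  exact hω r hr

lemma GS.glue {y : ℝ → V} {a b c : ℝ} (hac : a ≤ c) (hcb : c ≤ b)
    (h1 : GS F G y (Set.Icc a c)) (h2 : GS F G y (Set.Icc c b)) : GS F G y (Set.Icc a b) := by
  constructor
  · rw [← Set.Icc_union_Icc_eq_Icc hac hcb]
    exact h1.1.union_of_isClosed h2.1 isClosed_Icc isClosed_Icc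
  · intro j hj s hs t ht hst v hv ω hω
    rcases le_total t c with htc | htc
    · exact h1.2 j hj s ⟨hs.1, hst.trans htc⟩ t ⟨ht.1, htc⟩ hst v hv ω hω
    rcases le_total c s with hcs | hcs
    · exact h2.2 j hj s ⟨hcs, hs.2⟩ t ⟨htc, ht.2⟩ hst v hv ω hω
    have A := h1.2 j hj s ⟨hs.1, hcs⟩ c ⟨hac, le_rfl⟩ hcs v hv ω
      (fun r hr => hω r ⟨hr.1, hr.2.trans htc⟩)
    have B := h2.2 j hj c ⟨le_rfl, hcb⟩ t ⟨htc, ht.2⟩ htc v hv ω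
      (fun r hr => hω r ⟨hcs.trans hr.1, hr.2⟩)
    have e : y t - y s - (F v t - F v s) =
      (y c - y s - (F v c - F v s)) + (y t - y c - (F v t - F v c)) := by abel
    rw [e]
    refine (norm_add_le _ _).trans ?_
    linarith

lemma GS.rev {y : ℝ → V} {S : Set ℝ} (h : GS F G y S) :
    GS (fun v t => F v (-t)) (fun j t => - G j (-t)) (fun t => y (-t)) {t | -t ∈ S} := by
  refine ⟨h.1.comp continuous_neg.continuousOn (fun t ht => ht), ?_⟩
  intro j hj s hs t ht hst v hv ω hω
  have := h.2 j hj (-t) ht (-s) hs (by linarith) v hv ω (fun r hr => by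
    have := hω (-r) ⟨by linarith [hr.2], by linarith [hr.1]⟩
    simpa using this)
  have e : y (-t) - y (-s) - (F v (-t) - F v (-s)) =
    -(y (-s) - y (-t) - (F v (-s) - F v (-t))) := by abel
  show ‖y (-t) - y (-s) - (F v (-t) - F v (-s))‖ ≤ ω * (- G j (-t) - - G j (-s))
  rw [e, norm_neg]
  refine this.trans (le_of_eq (by ring))

lemma Gen.rev (h : Gen F G) : Gen (fun v t => F v (-t)) (fun j t => - G j (-t)) where
  mono j hj s t hst := neg_le_neg (h.mono j hj (neg_le_neg hst))
  cont j hj := ((h.cont j hj).comp continuous_neg).neg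
  b1 j hj v hv s t hst := by
    have := h.b1 j hj v hv (-t) (-s) (by linarith)
    rw [norm_sub_rev]
    linarith
  b2 j hj v w hv hw s t hst := by
    have := h.b2 j hj v w hv hw (-t) (-s) (by linarith)
    have e : F v (-t) - F v (-s) - (F w (-t) - F w (-s)) =
      -(F v (-s) - F v (-t) - (F w (-s) - F w (-t))) := by abel
    show ‖F v (-t) - F v (-s) - (F w (-t) - F w (-s))‖ ≤ ‖v - w‖ * (- G j (-t) - - G j (-s))
    rw [e, norm_neg]
    refine this.trans (le_of_eq (by ring))

lemma bound_aux {y : ℝ → V} {a b : ℝ} (h : ContinuousOn y (Set.Icc a b)) :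
    ∃ j : ℕ, 1 ≤ j ∧ ∀ r ∈ Set.Icc a b, ‖y r‖ ≤ (j : ℝ) := by
  obtain ⟨C, hC⟩ := isCompact_Icc.exists_bound_of_continuousOn h
  obtain ⟨n, hn⟩ := exists_nat_ge C
  exact ⟨n + 1, by omega, fun r hr => (hC r hr).trans (by push_cast; linarith)⟩

lemma diff_est (hG : Gen F G) {y z : ℝ → V} {s t ω : ℝ} {j : ℕ} (hj : 1 ≤ j) (hst : s ≤ t)
    (hy : GS F G y (Set.Icc s t)) (hz : GS F G z (Set.Icc s t))
    (bdy : ∀ r ∈ Set.Icc s t, ‖y r‖ ≤ (j : ℝ)) (bz : ∀ r ∈ Set.Icc s t, ‖z r‖ ≤ (j : ℝ))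
    (hω : ∀ r ∈ Set.Icc s t, ‖y r - z r‖ ≤ ω) :
    ‖(y t - z t) - (y s - z s)‖ ≤ ω * (G j t - G j s) := by
  have key : ∀ η > 0, ‖(y t - z t) - (y s - z s)‖ ≤ (ω + 2 * η) * (G j t - G j s) := by
    intro η hη
    obtain ⟨δ₁, hδ₁, H1⟩ := unif_aux hy.1 hη
    obtain ⟨δ₂, hδ₂, H2⟩ := unif_aux hz.1 hη
    rw [mul_sub]
    refine chain_bound (fun r => y r - z r) (fun r => (ω + 2 * η) * G j r) hst
      (lt_min hδ₁ hδ₂) ?_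
    intro c c' h1 h2 h3 h4
    have mc : c ∈ Set.Icc s t := ⟨h1, h2.trans h3⟩
    have mc' : c' ∈ Set.Icc s t := ⟨h1.trans h2, h3⟩
    have hcc : ∀ r ∈ Set.Icc c c', r ∈ Set.Icc s t ∧ |r - c| ≤ δ₁ ∧ |r - c| ≤ δ₂ := by
      intro r hr
      have : |r - c| ≤ min δ₁ δ₂ := by
        rw [abs_of_nonneg (by linarith [hr.1])]; linarith [hr.2]
      exact ⟨⟨h1.trans hr.1, hr.2.trans h3⟩, this.trans (min_le_left _ _),
        this.trans (min_le_right _ _)⟩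
    have A := hy.2 j hj c mc c' mc' h2 (y c) (bdy c mc) η (fun r hr =>
      ⟨bdy r (hcc r hr).1, (H1 r (hcc r hr).1 c mc (hcc r hr).2.1).le⟩)
    have B := hz.2 j hj c mc c' mc' h2 (z c) (bz c mc) η (fun r hr =>
      ⟨bz r (hcc r hr).1, (H2 r (hcc r hr).1 c mc (hcc r hr).2.2).le⟩)
    have C := hG.b2 j hj (y c) (z c) (bdy c mc) (bz c mc) c c' h2
    have D : 0 ≤ G j c' - G j c := sub_nonneg.2 (hG.mono j hj h2)
    have C' := C.trans (mul_le_mul_of_nonneg_right (hω c mc) D)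
    have e : y c' - z c' - (y c - z c) = (y c' - y c - (F (y c) c' - F (y c) c))
      - (z c' - z c - (F (z c) c' - F (z c) c))
      + ((F (y c) c' - F (y c) c) - (F (z c) c' - F (z c) c)) := by abel
    show ‖y c' - z c' - (y c - z c)‖ ≤ _
    rw [e]
    refine (norm_add_le _ _).trans ?_
    have := norm_sub_le (y c' - y c - (F (y c) c' - F (y c) c))
      (z c' - z c - (F (z c) c' - F (z c) c))
    linarith
  have D : 0 ≤ G j t - G j s := sub_nonneg.2 (hG.mono j hj hst)
  refine le_of_forall_pos_le_add fun ε hε => ?_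
  refine (key (ε / (2 * (G j t - G j s + 1))) (by positivity)).trans ?_
  have : 2 * (ε / (2 * (G j t - G j s + 1))) * (G j t - G j s) ≤ ε := by
    have : 2 * (ε / (2 * (G j t - G j s + 1))) * (G j t - G j s) =
      ε * ((G j t - G j s) / (G j t - G j s + 1)) := by field_simp
    rw [this]
    refine mul_le_of_le_one_right hε.le ?_
    rw [div_le_one (by positivity)]; linarith
  linarith

lemma uniq_fwd (hG : Gen F G) {y z : ℝ → V} {a b : ℝ} (hab : a ≤ b)
    (hy : GS F G y (Set.Icc a b)) (hz : GS F G z (Set.Icc a b)) (h : y a = z a) :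
    y b = z b := by
  obtain ⟨j₁, hj₁, b1⟩ := bound_aux hy.1
  obtain ⟨j₂, hj₂, b2⟩ := bound_aux hz.1
  set j := max j₁ j₂ with hjdef
  have hj : 1 ≤ j := hj₁.trans (le_max_left _ _)
  have b1' : ∀ r ∈ Set.Icc a b, ‖y r‖ ≤ (j : ℝ) := fun r hr =>
    (b1 r hr).trans (by exact_mod_cast le_max_left _ _)
  have b2' : ∀ r ∈ Set.Icc a b, ‖z r‖ ≤ (j : ℝ) := fun r hr =>
    (b2 r hr).trans (by exact_mod_cast le_max_right _ _)
  obtain ⟨δ, hδ, H⟩ := unif_aux (f := G j) (a := a) (b := b) (hG.cont j hj).continuousOn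
    (show (0 : ℝ) < 1 / 2 by norm_num)
  refine chain_aux hab hδ (fun c => y c = z c) h ?_
  intro c c' h1 h2 h3 h4 h5
  have sub : Set.Icc c c' ⊆ Set.Icc a b := Set.Icc_subset_Icc h1 h3
  obtain ⟨x, hx, hmax⟩ := isCompact_Icc.exists_isMaxOn (Set.nonempty_Icc.2 h2)
    ((hy.1.sub hz.1).norm.mono sub)
  have hmax' : ∀ r ∈ Set.Icc c c', ‖y r - z r‖ ≤ ‖y x - z x‖ := fun r hr => hmax hr
  have sub2 : Set.Icc c x ⊆ Set.Icc c c' := Set.Icc_subset_Icc le_rfl hx.2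
  have A := diff_est hG hj hx.1 (hy.mono (sub2.trans sub)) (hz.mono (sub2.trans sub))
    (fun r hr => b1' r (sub (sub2 hr))) (fun r hr => b2' r (sub (sub2 hr)))
    (fun r hr => hmax' r (sub2 hr))
  rw [h5, sub_self, sub_zero] at A
  have B := H x (sub hx) c (sub ⟨le_rfl, h2⟩) (by
    rw [abs_of_nonneg (by linarith [hx.1])]; linarith [hx.2])
  have B' : G j x - G j c < 1 / 2 := lt_of_le_of_lt (le_abs_self _) B
  have C : ‖y x - z x‖ = 0 := by nlinarith [norm_nonneg (y x - z x)]
  have D := hmax' c' ⟨h2, le_rfl⟩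
  rw [C] at D
  exact sub_eq_zero.1 (norm_le_zero_iff.1 D)

lemma uniq_bwd (hG : Gen F G) {y z : ℝ → V} {a b : ℝ} (hab : a ≤ b)
    (hy : GS F G y (Set.Icc a b)) (hz : GS F G z (Set.Icc a b)) (h : y b = z b) :
    y a = z a := by
  have e : Set.Icc (-b) (-a) ⊆ {t | -t ∈ Set.Icc a b} := fun t ht =>
    ⟨by linarith [ht.2], by linarith [ht.1]⟩
  have := uniq_fwd hG.rev (neg_le_neg hab) (hy.rev.mono e) (hz.rev.mono e) (by simpa using h)
  simpa using this

/-- approximate (Euler) solutions -/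
lemma euler (hG : Gen F G) {j : ℕ} (hj : 1 ≤ j) {a b : ℝ} (hab : a ≤ b) {y₀ : V}
    (h0 : ‖y₀‖ + (G j b - G j a) ≤ j) {ε : ℝ} (hε : 0 < ε) :
    ∃ y : ℝ → V, y a = y₀ ∧ ∀ s ∈ Set.Icc a b, ∀ t ∈ Set.Icc a b, s ≤ t →
      ‖y t - y s‖ ≤ G j t - G j s ∧ ∀ v, ‖v‖ ≤ (j : ℝ) →
        ‖y t - y s - (F v t - F v s)‖ ≤ (ε + ‖y s - v‖ + (G j t - G j s)) * (G j t - G j s) := by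
  obtain ⟨δ, hδ, H⟩ := unif_aux (f := G j) (a := a) (b := b) (hG.cont j hj).continuousOn hε
  refine chain_aux hab hδ (fun c => ∃ y : ℝ → V, y a = y₀ ∧ ∀ s ∈ Set.Icc a c, ∀ t ∈ Set.Icc a c,
    s ≤ t → ‖y t - y s‖ ≤ G j t - G j s ∧ ∀ v, ‖v‖ ≤ (j : ℝ) →
        ‖y t - y s - (F v t - F v s)‖ ≤ (ε + ‖y s - v‖ + (G j t - G j s)) * (G j t - G j s)) ?_ ?_
  · refine ⟨fun _ => y₀, rfl, fun s hs t ht _ => ?_⟩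
    have : s = t := by linarith [hs.1, hs.2, ht.1, ht.2]
    subst this
    simp
  intro c c' h1 h2 h3 h4 ⟨y, hya, hy⟩
  have mG := hG.mono j hj
  have ca : ‖y c‖ ≤ (j : ℝ) := by
    have A := (hy a ⟨le_rfl, h1⟩ c ⟨h1, le_rfl⟩ h1).1
    have B := mG (h2.trans h3)
    have C : ‖y c‖ ≤ ‖y c - y a‖ + ‖y a‖ := by simpa using norm_add_le (y c - y a) (y a)
    rw [hya] at A C
    linarith
  have sm : ∀ r, c ≤ r → r ≤ c' → G j r - G j c ≤ ε := by
    intro r hr1 hr2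
    have := H r ⟨h1.trans hr1, hr2.trans h3⟩ c ⟨h1, h2.trans h3⟩ (by
      rw [abs_of_nonneg (by linarith)]; linarith)
    exact (le_abs_self _).trans this.le
  refine ⟨fun t => if t ≤ c then y t else y c + (F (y c) t - F (y c) c), by simp [h1, hya], ?_⟩
  intro s hs t ht hst
  have Gst := mG hst
  rcases le_or_gt t c with htc | htc
  · have hsc := hst.trans htc
    simp only [htc, hsc, if_true]
    exact hy s ⟨hs.1, hsc⟩ t ⟨ht.1, htc⟩ hst
  rcases le_or_gt s c with hsc | hsc
  · simp only [hsc, if_true, not_le.2 htc, if_false]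
    obtain ⟨A1, A2⟩ := hy s ⟨hs.1, hsc⟩ c ⟨h1, le_rfl⟩ hsc
    have B1 := hG.b1 j hj _ ca c t htc.le
    have m1 := mG hsc
    have m2 := mG htc.le
    constructor
    · have e : y c + (F (y c) t - F (y c) c) - y s = (y c - y s) + (F (y c) t - F (y c) c) := by
        abel
      rw [e]
      refine (norm_add_le _ _).trans ?_
      linarith
    · intro v hv
      have A3 := A2 v hv
      have B2 := hG.b2 j hj _ v ca hv c t htc.le
      have e : y c + (F (y c) t - F (y c) c) - y s - (F v t - F v s) =
        (y c - y s - (F v c - F v s)) + ((F (y c) t - F (y c) c) - (F v t - F v c)) := by abel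
      have C : ‖y c - v‖ ≤ ‖y c - y s‖ + ‖y s - v‖ := norm_sub_le_norm_sub_add_norm_sub _ _ _
      rw [e]
      refine (norm_add_le _ _).trans ?_
      have n1 := norm_nonneg (y s - v)
      have D : ‖y c - v‖ * (G j t - G j c) ≤ (ε + ‖y s - v‖ + (G j t - G j s)) * (G j t - G j c) :=
        mul_le_mul_of_nonneg_right (by linarith) (by linarith)
      have D' : (ε + ‖y s - v‖ + (G j c - G j s)) * (G j c - G j s) ≤
        (ε + ‖y s - v‖ + (G j t - G j s)) * (G j c - G j s) :=
        mul_le_mul_of_nonneg_right (by linarith) (by linarith)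
      have E : (ε + ‖y s - v‖ + (G j t - G j s)) * (G j t - G j s) =
        (ε + ‖y s - v‖ + (G j t - G j s)) * (G j t - G j c) +
        (ε + ‖y s - v‖ + (G j t - G j s)) * (G j c - G j s) := by ring
      linarith
  · simp only [not_le.2 hsc, not_le.2 htc, if_false]
    have B1 := hG.b1 j hj _ ca s t hst
    have e : y c + (F (y c) t - F (y c) c) - (y c + (F (y c) s - F (y c) c)) =
      F (y c) t - F (y c) s := by abel
    rw [e]
    refine ⟨B1, fun v hv => ?_⟩
    have B2 := hG.b2 j hj _ v ca hv s t hst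
    refine B2.trans (mul_le_mul_of_nonneg_right ?_ (by linarith))
    have B3 := hG.b1 j hj _ ca c s hsc.le
    have B4 := sm s hsc.le hs.2
    have C : ‖y c - v‖ ≤ ‖y c + (F (y c) s - F (y c) c) - v‖ + ‖F (y c) s - F (y c) c‖ := by
      have := norm_sub_le (y c + (F (y c) s - F (y c) c) - v) (F (y c) s - F (y c) c)
      refine le_trans (le_of_eq ?_) this
      congr 1; abel
    linarith

lemma exist_loc [ProperSpace V] (hG : Gen F G) {j : ℕ} (hj : 1 ≤ j) {a b : ℝ} (hab : a ≤ b)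
    {y₀ : V} (h0 : ‖y₀‖ + (G j b - G j a) ≤ j) :
    ∃ y : ℝ → V, y a = y₀ ∧ GS F G y (Set.Icc a b) := by
  have ex : ∀ n : ℕ, _ := fun n : ℕ =>
    euler hG hj hab h0 (show (0 : ℝ) < 1 / ((n : ℝ) + 1) by positivity)
  choose Y hYa hY using ex
  have mG := hG.mono j hj
  let U : Ultrafilter ℕ := Filter.hyperfilter ℕ
  have hU : (U : Filter ℕ) ≤ atTop := by
    rw [← Nat.cofinite_eq_atTop]; exact Filter.hyperfilter_le_cofinite
  have lim : ∀ t, ∃ x, t ∈ Set.Icc a b → Tendsto (fun n => Y n t) U (𝓝 x) := by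
    intro t
    by_cases ht : t ∈ Set.Icc a b
    · have hb : ∀ n, Y n t ∈ Metric.closedBall (0 : V) j := by
        intro n
        have A := (hY n a ⟨le_rfl, hab⟩ t ht ht.1).1
        have B := mG ht.2
        have C : ‖Y n t‖ ≤ ‖Y n t - Y n a‖ + ‖Y n a‖ := by
          simpa using norm_add_le (Y n t - Y n a) (Y n a)
        rw [hYa] at A C
        rw [mem_closedBall_zero_iff]
        linarith
      obtain ⟨x, -, hx⟩ := (isCompact_closedBall (0 : V) j).ultrafilter_le_nhds'
        (U.map (fun n => Y n t)) (Ultrafilter.mem_map.2 (Filter.univ_mem' hb))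
      exact ⟨x, fun _ => hx⟩
    · exact ⟨0, fun h => absurd h ht⟩
  choose y hy using lim
  have hya : y a = y₀ := by
    refine tendsto_nhds_unique (hy a ⟨le_rfl, hab⟩) ?_
    simp only [hYa]; exact tendsto_const_nhds
  have P1 : ∀ s ∈ Set.Icc a b, ∀ t ∈ Set.Icc a b, s ≤ t → ‖y t - y s‖ ≤ G j t - G j s := by
    intro s hs t ht hst
    exact le_of_tendsto ((hy t ht).sub (hy s hs)).norm
      (Filter.Eventually.of_forall fun n => (hY n s hs t ht hst).1)
  have P2 : ∀ s ∈ Set.Icc a b, ∀ t ∈ Set.Icc a b, s ≤ t → ∀ v, ‖v‖ ≤ (j : ℝ) →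
      ‖y t - y s - (F v t - F v s)‖ ≤ (‖y s - v‖ + (G j t - G j s)) * (G j t - G j s) := by
    intro s hs t ht hst v hv
    have l1 := (((hy t ht).sub (hy s hs)).sub (tendsto_const_nhds (x := F v t - F v s))).norm
    have l0 : Tendsto (fun n : ℕ => 1 / ((n : ℝ) + 1)) U (𝓝 0) :=
      tendsto_one_div_add_atTop_nhds_zero_nat.mono_left hU
    have l2 := ((l0.add ((hy s hs).sub (tendsto_const_nhds (x := v))).norm).add
      (tendsto_const_nhds (x := G j t - G j s))).mul (tendsto_const_nhds (x := G j t - G j s))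
    rw [zero_add] at l2
    exact le_of_tendsto_of_tendsto l1 l2
      (Filter.Eventually.of_forall fun n => (hY n s hs t ht hst).2 v hv)
  have P3 : ∀ t ∈ Set.Icc a b, ‖y t‖ ≤ (j : ℝ) := by
    intro t ht
    have A := P1 a ⟨le_rfl, hab⟩ t ht ht.1
    have B := mG ht.2
    have C : ‖y t‖ ≤ ‖y t - y a‖ + ‖y a‖ := by
      simpa using norm_add_le (y t - y a) (y a)
    rw [hya] at A C
    linarith
  have P4 : ContinuousOn y (Set.Icc a b) := by
    rw [Metric.continuousOn_iff]
    intro t ht ε hε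
    obtain ⟨δ, hδ, H⟩ := unif_aux (f := G j) (a := a) (b := b) (hG.cont j hj).continuousOn hε
    refine ⟨δ, hδ, fun r hr hrt => ?_⟩
    rw [Real.dist_eq] at hrt
    have := H r hr t ht hrt.le
    rw [Real.norm_eq_abs] at this
    rw [dist_eq_norm]
    rcases le_total r t with h | h
    · rw [norm_sub_rev]
      refine (P1 r hr t ht h).trans_lt (lt_of_le_of_lt ?_ this)
      rw [abs_sub_comm]; exact le_abs_self _
    · exact (P1 t ht r hr h).trans_lt (lt_of_le_of_lt (le_abs_self _) this)
  refine ⟨y, hya, P4, ?_⟩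
  intro k hk s hs t ht hst v hv ω hω
  have sub : Set.Icc s t ⊆ Set.Icc a b := Set.Icc_subset_Icc hs.1 ht.2
  have key : ∀ η > 0, ‖y t - y s - (F v t - F v s)‖ ≤
      η * (G j t - G j s) + ω * (G k t - G k s) := by
    intro η hη
    obtain ⟨δ, hδ, H⟩ := unif_aux (f := G j) (a := a) (b := b) (hG.cont j hj).continuousOn hη
    have := chain_bound (fun r => y r - F v r) (fun r => η * G j r + ω * G k r) hst hδ ?_
    · have e : y t - y s - (F v t - F v s) = y t - F v t - (y s - F v s) := by abel
      rw [e]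
      refine this.trans (le_of_eq (by ring))
    intro c c' h1 h2 h3 h4
    have mc : c ∈ Set.Icc s t := ⟨h1, h2.trans h3⟩
    have mc' : c' ∈ Set.Icc s t := ⟨h1.trans h2, h3⟩
    have A := P2 c (sub mc) c' (sub mc') h2 (y c) (P3 c (sub mc))
    rw [sub_self, norm_zero, zero_add] at A
    have B := hG.b2 k hk (y c) v (hω c mc).1 hv c c' h2
    have B' := B.trans (mul_le_mul_of_nonneg_right (hω c mc).2
      (sub_nonneg.2 (hG.mono k hk h2)))
    have C := H c' (sub mc') c (sub mc) (by
      rw [abs_of_nonneg (by linarith)]; linarith)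
    have C' : G j c' - G j c ≤ η := (le_abs_self _).trans C.le
    have A' := A.trans (mul_le_mul_of_nonneg_right C' (sub_nonneg.2 (mG h2)))
    show ‖y c' - F v c' - (y c - F v c)‖ ≤ _
    have e : y c' - F v c' - (y c - F v c) = (y c' - y c - (F (y c) c' - F (y c) c))
      + ((F (y c) c' - F (y c) c) - (F v c' - F v c)) := by abel
    rw [e]
    refine (norm_add_le _ _).trans ?_
    linarith
  have D : 0 ≤ G j t - G j s := sub_nonneg.2 (mG hst)
  refine le_of_forall_pos_le_add fun ε hε => ?_
  refine (key (ε / (G j t - G j s + 1)) (by positivity)).trans ?_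
  have : (ε / (G j t - G j s + 1)) * (G j t - G j s) ≤ ε := by
    rw [div_mul_eq_mul_div, div_le_iff₀ (by positivity)]
    nlinarith
  linarith

end
section
variable {V : Type*} [NormedAddCommGroup V] {F : V → ℝ → V} {G : ℕ → ℝ → ℝ}

lemma ext_fwd [ProperSpace V] (hG : Gen F G) {S : Set ℝ} {y : ℝ → V} {t₀ : ℝ}
    (hS : S.OrdConnected) (h0 : t₀ ∈ S) (hy : GS F G y S)
    (hmax : ∀ t, t₀ ≤ t → ∀ z : ℝ → V, z t₀ = y t₀ → GS F G z (Set.Icc t₀ t) → t ∈ S)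
    {j : ℕ} (hj : 1 ≤ j) {t b : ℝ} (ht : t ∈ S) (ht₀ : t₀ ≤ t) (htb : t ≤ b)
    (hb : ‖y t‖ + (G j b - G j t) ≤ j) : b ∈ S := by
  obtain ⟨w, hw, hwG⟩ := exist_loc hG hj htb hb
  refine hmax b (ht₀.trans htb) (fun r => if r ≤ t then y r else w r) (by simp [ht₀]) ?_
  refine GS.glue ht₀ htb ?_ ?_
  · refine (hy.mono (hS.out h0 ht)).congr fun r hr => ?_
    simp [hr.2]
  · refine hwG.congr fun r hr => ?_
    by_cases h : r ≤ t
    · have : r = t := le_antisymm h hr.1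
      subst this
      simp [hw]
    · simp [h]

lemma step_fwd [ProperSpace V] (hG : Gen F G) {S : Set ℝ} {y : ℝ → V} {t₀ : ℝ}
    (hS : S.OrdConnected) (h0 : t₀ ∈ S) (hy : GS F G y S)
    (hmax : ∀ t, t₀ ≤ t → ∀ z : ℝ → V, z t₀ = y t₀ → GS F G z (Set.Icc t₀ t) → t ∈ S)
    {t : ℝ} (ht : t ∈ S) (ht₀ : t₀ ≤ t) : ∃ t' > t, t' ∈ S := by
  obtain ⟨n, hn⟩ := exists_nat_ge ‖y t‖
  have hc := (hG.cont (n + 1) (by omega)).continuousAt (x := t)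
  obtain ⟨δ, hδ, H⟩ := Metric.continuousAt_iff.1 hc 1 one_pos
  refine ⟨t + δ / 2, by linarith, ?_⟩
  refine ext_fwd hG hS h0 hy hmax (j := n + 1) (by omega) ht ht₀ (by linarith) ?_
  have := H (x := t + δ / 2) (by rw [Real.dist_eq, abs_of_nonneg] <;> linarith)
  rw [Real.dist_eq] at this
  have := (le_abs_self _).trans this.le
  push_cast
  linarith

lemma blow_fwd [ProperSpace V] (hG : Gen F G) {S : Set ℝ} {y : ℝ → V} {t₀ : ℝ}
    (hS : S.OrdConnected) (h0 : t₀ ∈ S) (hy : GS F G y S)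
    (hmax : ∀ t, t₀ ≤ t → ∀ z : ℝ → V, z t₀ = y t₀ → GS F G z (Set.Icc t₀ t) → t ∈ S)
    (hb : BddAbove S) : Tendsto (fun t => ‖y t‖) (𝓝[<] (sSup S)) atTop := by
  by_contra hcon
  rw [tendsto_atTop] at hcon
  push Not at hcon
  obtain ⟨R, hR⟩ := hcon
  have hlt : t₀ < sSup S := by
    obtain ⟨t', h1, h2⟩ := step_fwd hG hS h0 hy hmax h0 le_rfl
    exact lt_of_lt_of_le h1 (le_csSup hb h2)
  obtain ⟨n, hn⟩ := exists_nat_ge R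
  have hc := (hG.cont (n + 1) (by omega)).continuousAt (x := sSup S)
  obtain ⟨δ, hδ, H⟩ := Metric.continuousAt_iff.1 hc (1 / 2) (by norm_num)
  have hev : ∀ᶠ t in 𝓝[<] (sSup S), t ∈ Set.Ioo (max t₀ (sSup S - δ)) (sSup S) :=
    Ioo_mem_nhdsLT (max_lt hlt (by linarith))
  obtain ⟨t, ht1, ht2⟩ := (hR.and_eventually hev).exists
  have a1 := (le_max_left _ _).trans_lt ht2.1
  have a2 := (le_max_right _ _).trans_lt ht2.1
  have htS : t ∈ S := by
    obtain ⟨t', h1, h2⟩ := exists_lt_of_lt_csSup ⟨t₀, h0⟩ ht2.2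
    exact hS.out h0 h1 ⟨a1.le, h2.le⟩
  have : sSup S + δ / 2 ∈ S := by
    refine ext_fwd hG hS h0 hy hmax (j := n + 1) (by omega) htS a1.le (by linarith [ht2.2]) ?_
    have A := H (x := sSup S + δ / 2) (by rw [Real.dist_eq, abs_of_nonneg] <;> linarith)
    have B := H (x := t) (by rw [Real.dist_eq, abs_lt]; constructor <;> linarith [ht2.2])
    rw [Real.dist_eq, abs_lt] at A B
    push_cast
    linarith [A.2, B.1]
  have := le_csSup hb this
  linarith

lemma max_exists [ProperSpace V] (hG : Gen F G) (t₀ : ℝ) (y₀ : V) :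
    ∃ (S : Set ℝ) (y : ℝ → V), t₀ ∈ S ∧ y t₀ = y₀ ∧ S.OrdConnected ∧ IsOpen S ∧ GS F G y S ∧
      (∀ S' : Set ℝ, S'.OrdConnected → t₀ ∈ S' → ∀ z : ℝ → V, z t₀ = y₀ → GS F G z S' →
        S' ⊆ S ∧ Set.EqOn z y S') ∧
      (BddAbove S → Tendsto (fun t => ‖y t‖) (𝓝[<] (sSup S)) atTop) ∧
      (BddBelow S → Tendsto (fun t => ‖y t‖) (𝓝[>] (sInf S)) atTop) := by
  -- the set of reachable times
  let S : Set ℝ := {t | ∃ z : ℝ → V, z t₀ = y₀ ∧ GS F G z (Set.uIcc t₀ t)}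
  have hex : ∀ t, ∃ x : V, ∀ z : ℝ → V, z t₀ = y₀ → GS F G z (Set.uIcc t₀ t) → z t = x := by
    intro t
    by_cases h : t ∈ S
    · obtain ⟨w, hw, hwG⟩ := h
      refine ⟨w t, fun z hz hzG => ?_⟩
      rcases le_total t₀ t with h | h
      · rw [Set.uIcc_of_le h] at hwG hzG
        exact uniq_fwd hG h hzG hwG (hz.trans hw.symm)
      · rw [Set.uIcc_of_ge h] at hwG hzG
        exact uniq_bwd hG h hzG hwG (hz.trans hw.symm)
    · exact ⟨0, fun z hz hzG => absurd ⟨z, hz, hzG⟩ h⟩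
  choose y hy using hex
  have hEq : ∀ t, ∀ z : ℝ → V, z t₀ = y₀ → GS F G z (Set.uIcc t₀ t) →
      Set.EqOn z y (Set.uIcc t₀ t) := by
    intro t z hz hzG r hr
    exact hy r z hz (hzG.mono (Set.uIcc_subset_uIcc_left hr))
  have hmem : ∀ t, t ∈ S → GS F G y (Set.uIcc t₀ t) := by
    rintro t ⟨z, hz, hzG⟩
    have := (hEq t z hz hzG).symm
    exact GS.congr hzG this
  have hsub : ∀ t ∈ S, Set.uIcc t₀ t ⊆ S := by
    rintro t ⟨z, hz, hzG⟩ r hr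
    exact ⟨z, hz, hzG.mono (Set.uIcc_subset_uIcc_left hr)⟩
  -- a constant function is a solution on the degenerate interval
  have h0 : t₀ ∈ S := by
    refine ⟨fun _ => y₀, rfl, continuousOn_const, ?_⟩
    intro j hj s hs t ht hst v hv ω hω
    rw [Set.uIcc_self, Set.mem_singleton_iff] at hs ht
    subst hs; subst ht
    simp
  have hy0 : y t₀ = y₀ := by
    obtain ⟨z, hz, hzG⟩ := h0
    rw [← hy t₀ z hz hzG, hz]
  have hpq : ∀ p ∈ S, ∀ q ∈ S, p ≤ t₀ → t₀ ≤ q → GS F G y (Set.Icc p q) := by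
    intro p hp q hq h1 h2
    have A := hmem p hp
    have B := hmem q hq
    rw [Set.uIcc_of_ge h1] at A
    rw [Set.uIcc_of_le h2] at B
    exact A.glue h1 h2 B
  have hpqS : ∀ p ∈ S, ∀ q ∈ S, p ≤ t₀ → t₀ ≤ q → Set.Icc p q ⊆ S := by
    intro p hp q hq h1 h2 r hr
    rcases le_total r t₀ with h | h
    · exact hsub p hp (by rw [Set.uIcc_of_ge h1]; exact ⟨hr.1, h⟩)
    · exact hsub q hq (by rw [Set.uIcc_of_le h2]; exact ⟨h, hr.2⟩)
  have hmin : ∀ p ∈ S, min p t₀ ∈ S := fun p hp => by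
    rcases le_total p t₀ with h | h
    · rwa [min_eq_left h]
    · rwa [min_eq_right h]
  have hmaxS : ∀ p ∈ S, max p t₀ ∈ S := fun p hp => by
    rcases le_total p t₀ with h | h
    · rwa [max_eq_right h]
    · rwa [max_eq_left h]
  have hord : S.OrdConnected := by
    refine ⟨fun p hp q hq r hr => ?_⟩
    exact hpqS _ (hmin p hp) _ (hmaxS q hq) (min_le_right _ _) (le_max_right _ _)
      ⟨(min_le_left _ _).trans hr.1, hr.2.trans (le_max_left _ _)⟩
  have hloc : ∀ p ∈ S, ∀ q ∈ S, GS F G y (Set.Icc p q) := by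
    intro p hp q hq
    exact (hpq _ (hmin p hp) _ (hmaxS q hq) (min_le_right _ _) (le_max_right _ _)).mono
      (Set.Icc_subset_Icc (min_le_left _ _) (le_max_left _ _))
  -- forward and backward maximality
  have hf : ∀ t, t₀ ≤ t → ∀ z : ℝ → V, z t₀ = y t₀ → GS F G z (Set.Icc t₀ t) → t ∈ S := by
    intro t ht z hz hzG
    exact ⟨z, hz.trans hy0, by rwa [Set.uIcc_of_le ht]⟩
  have hb : ∀ t, t ≤ t₀ → ∀ z : ℝ → V, z t₀ = y t₀ → GS F G z (Set.Icc t t₀) → t ∈ S := by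
    intro t ht z hz hzG
    exact ⟨z, hz.trans hy0, by rwa [Set.uIcc_of_ge ht]⟩
  have hGS0 : ∀ j : ℕ, 1 ≤ j → ∀ s ∈ S, ∀ t ∈ S, s ≤ t → ∀ v : V, ‖v‖ ≤ (j : ℝ) →
    ∀ ω : ℝ, (∀ r ∈ Set.Icc s t, ‖y r‖ ≤ (j : ℝ) ∧ ‖y r - v‖ ≤ ω) →
      ‖y t - y s - (F v t - F v s)‖ ≤ ω * (G j t - G j s) := by
    intro j hj s hs t ht hst
    exact (hloc s hs t ht).2 j hj s ⟨le_rfl, hst⟩ t ⟨hst, le_rfl⟩ hst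
  let S' : Set ℝ := {t | -t ∈ S}
  have hord' : S'.OrdConnected := by
    refine ⟨fun p hp q hq r hr => ?_⟩
    exact hord.out hq hp ⟨neg_le_neg hr.2, neg_le_neg hr.1⟩
  have h0' : -t₀ ∈ S' := by show - -t₀ ∈ S; rwa [neg_neg]
  have hb' : ∀ t, -t₀ ≤ t → ∀ z : ℝ → V, z (-t₀) = y (- -t₀) →
      GS (fun v t => F v (-t)) (fun j t => - G j (-t)) z (Set.Icc (-t₀) t) → t ∈ S' := by
    intro t ht z hz hzG
    have e : Set.Icc (-t) t₀ ⊆ {r | -r ∈ Set.Icc (-t₀) t} := fun r hr =>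
      ⟨by linarith [hr.2], by linarith [hr.1]⟩
    refine hb (-t) (by linarith) (fun r => z (-r)) (by simpa using hz) ?_
    have := hzG.rev.mono e
    simpa using this
  -- continuity of y on S, via two-sided extension
  have stepF : ∀ t ∈ S, ∃ t' > t, t' ∈ S := by
    intro t ht
    rcases le_or_gt t₀ t with h | h
    · have hI : GS F G y (Set.Icc t₀ t) := hloc t₀ h0 t ht
      by_contra hcon
      push Not at hcon
      obtain ⟨t', h1, h2⟩ := step_fwd (S := Set.Icc t₀ t) hG Set.ordConnected_Icc
        ⟨le_rfl, h⟩ hI (fun r hr z hz hzG => ⟨hr, by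
          by_contra hlt
          exact hcon r (not_le.1 hlt) (hf r hr z hz hzG)⟩) (t := t) ⟨h, le_rfl⟩ h
      exact absurd h2.2 (not_le.2 h1)
    · exact ⟨t₀, h, h0⟩
  have stepB : ∀ t ∈ S, ∃ t' < t, t' ∈ S := by
    intro t ht
    rcases le_or_gt t t₀ with h | h
    · have hI : GS F G y (Set.Icc t t₀) := hloc t ht t₀ h0
      have e : Set.Icc (-t₀) (-t) ⊆ {r | -r ∈ Set.Icc t t₀} := fun r hr =>
        ⟨by linarith [hr.2], by linarith [hr.1]⟩
      by_contra hcon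
      push Not at hcon
      obtain ⟨t', h1, h2⟩ := step_fwd (S := Set.Icc (-t₀) (-t)) hG.rev Set.ordConnected_Icc
        ⟨le_rfl, neg_le_neg h⟩ (hI.rev.mono e) (fun r hr z hz hzG => ⟨hr, by
          by_contra hlt
          exact hcon (-r) (by linarith) (hb' r hr z hz hzG)⟩) (t := -t)
          ⟨neg_le_neg h, le_rfl⟩ (neg_le_neg h)
      exact absurd h2.2 (not_le.2 h1)
    · exact ⟨t₀, h, h0⟩
  have hnhds : ∀ t ∈ S, ∃ p ∈ S, ∃ q ∈ S, Set.Icc p q ∈ 𝓝 t := by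
    intro t ht
    obtain ⟨q, h1, h2⟩ := stepF t ht
    obtain ⟨p, h3, h4⟩ := stepB t ht
    exact ⟨p, h4, q, h2, Icc_mem_nhds h3 h1⟩
  have hopen : IsOpen S := by
    rw [isOpen_iff_mem_nhds]
    intro t ht
    obtain ⟨p, hp, q, hq, h⟩ := hnhds t ht
    exact Filter.mem_of_superset h (hord.out hp hq)
  have hGS : GS F G y S := by
    refine ⟨fun t ht => ?_, hGS0⟩
    obtain ⟨p, hp, q, hq, h⟩ := hnhds t ht
    exact ((hloc p hp q hq).1.continuousAt h).continuousWithinAt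
  refine ⟨S, y, h0, hy0, hord, hopen, hGS, ?_, ?_, ?_⟩
  · intro S' hS' h0' z hz hzG
    have key : ∀ t ∈ S', GS F G z (Set.uIcc t₀ t) := fun t ht =>
      hzG.mono (hS'.uIcc_subset h0' ht)
    exact ⟨fun t ht => ⟨z, hz, key t ht⟩, fun t ht => hy t z hz (key t ht)⟩
  · exact blow_fwd hG hord h0 hGS hf
  · intro hbd
    have hne : S.Nonempty := ⟨t₀, h0⟩
    have eS : S' = -S := rfl
    have A := blow_fwd hG.rev hord' h0' hGS.rev hb' (by rw [eS]; exact hbd.neg)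
    have eSup : sSup S' = - sInf S := by
      rw [eS, csSup_neg hne hbd]
    rw [eSup] at A
    have B : Tendsto (fun t : ℝ => -t) (𝓝[>] (sInf S)) (𝓝[<] (-sInf S)) :=
      tendsto_neg_nhdsGT
    have := A.comp B
    simpa [Function.comp_def] using this

end
/-! ### Concrete part -/

lemma IsBMeasure.union {μ : Set ℝ → ℝ} (h : IsBMeasure μ) {A B : Set ℝ} (hA : MeasurableSet A)
    (hB : MeasurableSet B) (bA : Bornology.IsBounded A) (bB : Bornology.IsBounded B)
    (hd : Disjoint A B) : μ (A ∪ B) = μ A + μ B := by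
  let C : ℕ → Set ℝ := fun n => if n = 0 then A else if n = 1 then B else ∅
  have hU : (⋃ n, C n) = A ∪ B := by
    ext x
    simp only [Set.mem_iUnion, Set.mem_union]
    constructor
    · rintro ⟨n, hn⟩
      by_cases h0 : n = 0
      · left; simpa [C, h0] using hn
      · by_cases h1 : n = 1
        · right; simpa [C, h1] using hn
        · simp [C, h0, h1] at hn
    · rintro (hx | hx)
      · exact ⟨0, by simpa [C] using hx⟩
      · exact ⟨1, by simpa [C] using hx⟩
  have h1 := h.countably_additive C (fun n => by
      by_cases h0 : n = 0
      · simpa [C, h0] using hA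
      · by_cases h1 : n = 1
        · simpa [C, h1] using hB
        · simp [C, h0, h1]) (fun n => by
      by_cases h0 : n = 0
      · simpa [C, h0] using bA
      · by_cases h1 : n = 1
        · simpa [C, h1] using bB
        · simp [C, h0, h1]) (by
      intro p q hpq
      show Disjoint (C p) (C q)
      rcases p with _ | _ | p <;> rcases q with _ | _ | q <;>
        simp [C, hd, hd.symm] at hpq ⊢) (by rw [hU]; exact bA.union bB)
  have h2 : HasSum (fun n => μ (C n)) (∑ n ∈ Finset.range 2, μ (C n)) := by
    refine hasSum_sum_of_ne_finset_zero fun n hn => ?_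
    have : 1 < n := by simpa using hn
    have h0 : n ≠ 0 := by omega
    have h1 : n ≠ 1 := by omega
    simp [C, h0, h1, h.empty]
  have := h1.unique h2
  rw [hU] at this
  rw [this, Finset.sum_range_succ, Finset.sum_range_one]
  simp [C]

lemma IsBMeasure.Ioc_add {μ : Set ℝ → ℝ} (h : IsBMeasure μ) {a b c : ℝ} (hab : a ≤ b)
    (hbc : b ≤ c) : μ (Set.Ioc a c) = μ (Set.Ioc a b) + μ (Set.Ioc b c) := by
  rw [← Set.Ioc_union_Ioc_eq_Ioc hab hbc]
  exact h.union measurableSet_Ioc measurableSet_Ioc (Metric.isBounded_Ioc _ _)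
    (Metric.isBounded_Ioc _ _) (Set.Ioc_disjoint_Ioc_of_le le_rfl)

lemma IsBMeasure.Icc_eq {μ : Set ℝ → ℝ} (h : IsBMeasure μ) {a b : ℝ} (hab : a ≤ b) :
    μ (Set.Icc a b) = μ (Set.Ioc a b) := by
  have e : Set.Icc a b = {a} ∪ Set.Ioc a b := by
    ext x
    simp only [Set.mem_Icc, Set.mem_union, Set.mem_singleton_iff, Set.mem_Ioc]
    constructor
    · rintro ⟨h1, h2⟩
      rcases h1.eq_or_lt with h | h
      · exact Or.inl h.symm
      · exact Or.inr ⟨h, h2⟩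
    · rintro (h | h)
      · subst h; exact ⟨le_rfl, hab⟩
      · exact ⟨h.1.le, h.2⟩
  rw [e, h.union (measurableSet_singleton a) measurableSet_Ioc Bornology.isBounded_singleton
    (Metric.isBounded_Ioc _ _) (by simp), h.singleton, zero_add]

/-- primitive of a b-measure -/
noncomputable def prim (μ : Set ℝ → ℝ) (t : ℝ) : ℝ :=
  if 0 ≤ t then μ (Set.Ioc 0 t) else - μ (Set.Ioc t 0)

lemma IsBMeasure.prim_sub {μ : Set ℝ → ℝ} (h : IsBMeasure μ) {s t : ℝ} (hst : s ≤ t) :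
    prim μ t - prim μ s = μ (Set.Ioc s t) := by
  unfold prim
  by_cases hs : 0 ≤ s
  · rw [if_pos hs, if_pos (hs.trans hst), h.Ioc_add hs hst]; ring
  · rw [if_neg hs]
    push Not at hs
    by_cases ht : 0 ≤ t
    · rw [if_pos ht, h.Ioc_add hs.le ht]; ring
    · rw [if_neg ht]
      push Not at ht
      rw [h.Ioc_add hst ht.le]; ring

lemma TVLE.one {μ : Set ℝ → ℝ} {m : Measure ℝ} (h : TVLE μ m) (s t : ℝ) :
    |μ (Set.Ioc s t)| ≤ (m (Set.Ioc s t)).toReal := by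
  have := h (Set.Ioc s t) (Metric.isBounded_Ioc _ _) measurableSet_Ioc 1 (fun _ => Set.Ioc s t)
    ⟨fun _ => measurableSet_Ioc, fun p q hpq => absurd (Subsingleton.elim p q) hpq,
      Set.iUnion_const _⟩
  simpa using this

lemma DiffLE.one {μ₁ μ₂ : Set ℝ → ℝ} {c : ℝ} {m : Measure ℝ} (h : DiffLE μ₁ μ₂ c m) (s t : ℝ) :
    |μ₁ (Set.Ioc s t) - μ₂ (Set.Ioc s t)| ≤ c * (m (Set.Ioc s t)).toReal := by
  have := h (Set.Ioc s t) (Metric.isBounded_Ioc _ _) measurableSet_Ioc 1 (fun _ => Set.Ioc s t)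
    ⟨fun _ => measurableSet_Ioc, fun p q hpq => absurd (Subsingleton.elim p q) hpq,
      Set.iUnion_const _⟩
  simpa using this

/-- primitive of a measure -/
noncomputable def mprim (m : Measure ℝ) (t : ℝ) : ℝ := ∫ _ in (0 : ℝ)..t, (1 : ℝ) ∂m

lemma GoodMeasure.mprim_sub {m : Measure ℝ} (h : GoodMeasure m) {s t : ℝ} (hst : s ≤ t) :
    mprim m t - mprim m s = (m (Set.Ioc s t)).toReal := by
  haveI := h.1
  unfold mprim
  have hi : ∀ a b : ℝ, IntervalIntegrable (fun _ => (1 : ℝ)) m a b := fun a b => by simp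
  rw [intervalIntegral.integral_interval_sub_left (hi _ _) (hi _ _),
    intervalIntegral.integral_of_le hst]
  simp [Measure.real]

lemma GoodMeasure.mprim_cont {m : Measure ℝ} (h : GoodMeasure m) : Continuous (mprim m) := by
  haveI := h.1
  haveI : NullSingletonClass m := ⟨h.2⟩
  exact intervalIntegral.continuous_primitive (fun a b => by simp) 0

lemma GoodMeasure.mprim_mono {m : Measure ℝ} (h : GoodMeasure m) : Monotone (mprim m) := by
  intro s t hst
  have := h.mprim_sub hst
  have h2 : 0 ≤ (m (Set.Ioc s t)).toReal := ENNReal.toReal_nonneg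
  linarith

section conc
variable {N : ℕ} (νbar : Fin N → EuclideanSpace ℝ (Fin N) → Set ℝ → ℝ) (mB lB : ℕ → Measure ℝ)

noncomputable def FF (v : EuclideanSpace ℝ (Fin N)) (t : ℝ) : EuclideanSpace ℝ (Fin N) :=
  WithLp.toLp 2 (fun i => prim (νbar i v) t)

noncomputable def gg (j : ℕ) (t : ℝ) : ℝ := mprim (mB j) t + mprim (lB j) t

noncomputable def GG (N : ℕ) (mB lB : ℕ → Measure ℝ) (j : ℕ) (t : ℝ) : ℝ := N * gg mB lB j t

variable {νbar mB lB}

lemma norm_comp_le {x : EuclideanSpace ℝ (Fin N)} {c : ℝ} (h : ∀ i, |x i| ≤ c) :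
    ‖x‖ ≤ N * c := by
  have e : x = ∑ i, EuclideanSpace.single i (x i) := by
    ext k
    simp [Finset.sum_apply, Pi.single_apply]
  rw [e]
  refine (norm_sum_le _ _).trans ?_
  calc ∑ i, ‖EuclideanSpace.single i (x i)‖ ≤ ∑ _i : Fin N, c :=
        Finset.sum_le_sum fun i _ => by simpa using h i
    _ = N * c := by simp

lemma comp_le_norm (x : EuclideanSpace ℝ (Fin N)) (i : Fin N) : |x i| ≤ ‖x‖ := by
  simpa using PiLp.norm_apply_le x i

lemma FF_sub (hν : IsNDimParamBMeasure νbar mB lB) (v : EuclideanSpace ℝ (Fin N)) (i : Fin N)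
    {s t : ℝ} (hst : s ≤ t) : (FF νbar v t - FF νbar v s) i = νbar i v (Set.Ioc s t) := by
  simpa [FF] using (hν.1 i v).prim_sub hst

lemma gg_mono (hν : IsNDimParamBMeasure νbar mB lB) {j : ℕ} (hj : 1 ≤ j) :
    Monotone (gg mB lB j) :=
  ((hν.2 j hj).1.mprim_mono).add ((hν.2 j hj).2.1.mprim_mono)

lemma gg_b1 (hν : IsNDimParamBMeasure νbar mB lB) {j : ℕ} (hj : 1 ≤ j)
    {v : EuclideanSpace ℝ (Fin N)} (hv : ‖v‖ ≤ (j : ℝ)) (i : Fin N) {s t : ℝ} (hst : s ≤ t) :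
    |νbar i v (Set.Ioc s t)| ≤ gg mB lB j t - gg mB lB j s := by
  obtain ⟨h1, h2, h3, h4⟩ := hν.2 j hj
  have A := (h3 i v hv).one s t
  rw [← h1.mprim_sub hst] at A
  have B := h2.mprim_mono hst
  unfold gg
  linarith

lemma gg_b2 (hν : IsNDimParamBMeasure νbar mB lB) {j : ℕ} (hj : 1 ≤ j)
    {v w : EuclideanSpace ℝ (Fin N)} (hv : ‖v‖ ≤ (j : ℝ)) (hw : ‖w‖ ≤ (j : ℝ)) (i : Fin N)
    {s t : ℝ} (hst : s ≤ t) :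
    |νbar i v (Set.Ioc s t) - νbar i w (Set.Ioc s t)| ≤
      ‖v - w‖ * (gg mB lB j t - gg mB lB j s) := by
  obtain ⟨h1, h2, h3, h4⟩ := hν.2 j hj
  have A := (h4 i v w hv hw).one s t
  rw [← h2.mprim_sub hst] at A
  have B := h1.mprim_mono hst
  refine A.trans (mul_le_mul_of_nonneg_left ?_ (norm_nonneg _))
  unfold gg
  linarith

lemma gen_conc (hν : IsNDimParamBMeasure νbar mB lB) : Gen (FF νbar) (GG N mB lB) where
  mono j hj s t hst := mul_le_mul_of_nonneg_left (gg_mono hν hj hst) (Nat.cast_nonneg N)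
  cont j hj := continuous_const.mul
    (((hν.2 j hj).1.mprim_cont).add ((hν.2 j hj).2.1.mprim_cont))
  b1 j hj v hv s t hst := by
    unfold GG
    rw [← mul_sub]
    refine norm_comp_le fun i => ?_
    rw [FF_sub hν v i hst]
    exact gg_b1 hν hj hv i hst
  b2 j hj v w hv hw s t hst := by
    unfold GG
    rw [← mul_sub, mul_left_comm]
    refine norm_comp_le fun i => ?_
    rw [PiLp.sub_apply, FF_sub hν v i hst, FF_sub hν w i hst]
    exact gg_b2 hν hj hv hw i hst

end conc

/-! ### Tagged partitions -/

lemma TaggedPartition.mono_t {a b : ℝ} (P : TaggedPartition a b) :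
    ∀ p q, p ≤ q → q ≤ P.k → P.t p ≤ P.t q := by
  intro p q hpq
  induction q, hpq using Nat.le_induction with
  | base => intro _; exact le_rfl
  | succ q hq ih => intro h; exact (ih (by omega)).trans (P.lt q (by omega)).le

lemma TaggedPartition.t_mem {a b : ℝ} (P : TaggedPartition a b) {p : ℕ} (hp : p ≤ P.k) :
    P.t p ∈ Set.Icc a b := by
  constructor
  · have := P.mono_t 0 p (by omega) hp; rwa [P.left] at this
  · have := P.mono_t p P.k hp le_rfl; rwa [P.right] at this

/-- concatenation -/
def TaggedPartition.concat {a b c : ℝ} (P : TaggedPartition a b) (Q : TaggedPartition b c) :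
    TaggedPartition a c where
  k := P.k + Q.k
  k_pos := by have := P.k_pos; omega
  t := fun i => if i < P.k then P.t i else Q.t (i - P.k)
  tag := fun i => if i < P.k then P.tag i else Q.tag (i - P.k)
  left := by simp [P.k_pos, P.left]
  right := by simp [Q.right]
  lt := by
    intro i hi
    by_cases h : i < P.k
    · by_cases h' : i + 1 < P.k
      · simpa [h, h'] using P.lt i h
      · have e : i + 1 = P.k := by omega
        have := P.lt i h
        rw [e, P.right] at this
        simpa [h, h', e, Q.left] using this
    · have h' : ¬ i + 1 < P.k := by omega
      have e : i + 1 - P.k = (i - P.k) + 1 := by omega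
      simpa [h, h', e] using Q.lt (i - P.k) (by omega)
  tag_mem := by
    intro i hi
    by_cases h : i < P.k
    · by_cases h' : i + 1 < P.k
      · simpa [h, h'] using P.tag_mem i h
      · have e : i + 1 = P.k := by omega
        have := P.tag_mem i h
        rw [e, P.right] at this
        simpa [h, h', e, Q.left] using this
    · have h' : ¬ i + 1 < P.k := by omega
      have e : i + 1 - P.k = (i - P.k) + 1 := by omega
      simpa [h, h', e] using Q.tag_mem (i - P.k) (by omega)

lemma TaggedPartition.concat_t_lt {a b c : ℝ} (P : TaggedPartition a b) (Q : TaggedPartition b c)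
    {i : ℕ} (h : i < P.k) : (P.concat Q).t i = P.t i ∧ (P.concat Q).t (i + 1) = P.t (i + 1) ∧
      (P.concat Q).tag i = P.tag i := by
  refine ⟨by simp [TaggedPartition.concat, h], ?_, by simp [TaggedPartition.concat, h]⟩
  by_cases h' : i + 1 < P.k
  · simp [TaggedPartition.concat, h']
  · have e : i + 1 = P.k := by omega
    simp [TaggedPartition.concat, e, Q.left, P.right]

lemma TaggedPartition.concat_t_ge {a b c : ℝ} (P : TaggedPartition a b) (Q : TaggedPartition b c)
    (i : ℕ) : (P.concat Q).t (P.k + i) = Q.t i ∧ (P.concat Q).t (P.k + i + 1) = Q.t (i + 1) ∧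
      (P.concat Q).tag (P.k + i) = Q.tag i := by
  have h' : ¬ P.k + i + 1 < P.k := by omega
  have e : P.k + i + 1 - P.k = i + 1 := by omega
  refine ⟨by simp [TaggedPartition.concat], ?_, by simp [TaggedPartition.concat]⟩
  simp only [TaggedPartition.concat, h', if_false, e]

lemma TaggedPartition.concat_mesh {a b c δ : ℝ} {P : TaggedPartition a b}
    {Q : TaggedPartition b c} (hP : P.MeshLT δ) (hQ : Q.MeshLT δ) : (P.concat Q).MeshLT δ := by
  intro i hi
  by_cases h : i < P.k
  · obtain ⟨e1, e2, -⟩ := P.concat_t_lt Q h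
    rw [e1, e2]; exact hP i h
  · have hi' : i < P.k + Q.k := hi
    obtain ⟨n, rfl⟩ : ∃ n, i = P.k + n := ⟨i - P.k, by omega⟩
    obtain ⟨e1, e2, -⟩ := P.concat_t_ge Q n
    rw [e1, e2]; exact hQ n (by omega)

lemma RiemannSum_concat {V : Type*} [NormedAddCommGroup V] (ν : V → Set ℝ → ℝ) (y : ℝ → V)
    {a b c : ℝ} (P : TaggedPartition a b) (Q : TaggedPartition b c) :
    RiemannSum ν y (P.concat Q) = RiemannSum ν y P + RiemannSum ν y Q := by
  unfold RiemannSum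
  rw [show (P.concat Q).k = P.k + Q.k from rfl, Finset.sum_range_add]
  congr 1
  · refine Finset.sum_congr rfl fun i hi => ?_
    obtain ⟨e1, e2, e3⟩ := P.concat_t_lt Q (Finset.mem_range.1 hi)
    rw [e1, e2, e3]
  · refine Finset.sum_congr rfl fun i hi => ?_
    obtain ⟨e1, e2, e3⟩ := P.concat_t_ge Q i
    rw [e1, e2, e3]

lemma TaggedPartition.exists_mesh {a b δ : ℝ} (hab : a < b) (hδ : 0 < δ) :
    ∃ P : TaggedPartition a b, P.MeshLT δ := by
  have single : ∀ c c' : ℝ, c < c' → c' ≤ c + δ / 2 → ∃ P : TaggedPartition c c', P.MeshLT δ := by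
    intro c c' h h'
    refine ⟨⟨1, one_pos, fun i => if i = 0 then c else c', fun _ => c, by simp, by simp, ?_, ?_⟩,
      ?_⟩
    · intro i hi
      have : i = 0 := by omega
      subst this; simpa using h
    · intro i hi
      have : i = 0 := by omega
      subst this; simpa using h.le
    · intro i hi
      have : i = 0 := by
        have : i < 1 := hi
        omega
      subst this
      simp
      linarith
  have := chain_aux hab.le (half_pos hδ)
    (fun c => c = a ∨ ∃ P : TaggedPartition a c, P.MeshLT δ) (Or.inl rfl) (by
      intro c c' h1 h2 h3 h4 h5
      rcases h2.eq_or_lt with h | h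
      · rwa [← h]
      right
      obtain ⟨Q, hQ⟩ := single c c' h h4
      rcases h5 with rfl | ⟨P, hP⟩
      · exact ⟨Q, hQ⟩
      · exact ⟨P.concat Q, TaggedPartition.concat_mesh hP hQ⟩)
  rcases this with h | h
  · exact absurd h hab.ne'
  · exact h

lemma TaggedPartition.MeshLT.mono {a b δ δ' : ℝ} {P : TaggedPartition a b} (h : P.MeshLT δ)
    (hd : δ ≤ δ') : P.MeshLT δ' := fun i hi => (h i hi).trans_le hd

section
variable {V : Type*} [NormedAddCommGroup V] {ν : V → Set ℝ → ℝ} {y : ℝ → V}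

lemma IsCurveIntegral.sub_left {a s t L₁ L₂ : ℝ} (has : a < s)
    (h1 : IsCurveIntegral ν y a s L₁) (h2 : IsCurveIntegral ν y a t L₂) :
    IsCurveIntegral ν y s t (L₂ - L₁) := by
  intro ε hε
  obtain ⟨δ₁, hδ₁, H1⟩ := h1 (ε / 2) (half_pos hε)
  obtain ⟨δ₂, hδ₂, H2⟩ := h2 (ε / 2) (half_pos hε)
  refine ⟨δ₂, hδ₂, fun Q hQ => ?_⟩
  obtain ⟨P, hP⟩ := TaggedPartition.exists_mesh has (lt_min hδ₁ hδ₂)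
  have A := H1 P (hP.mono (min_le_left _ _))
  have B := H2 (P.concat Q) (TaggedPartition.concat_mesh (hP.mono (min_le_right _ _)) hQ)
  rw [RiemannSum_concat] at B
  rw [abs_lt] at A B ⊢
  constructor <;> linarith [A.1, A.2, B.1, B.2]

lemma IsCurveIntegral.sub_right {a s t L₁ L₂ : ℝ} (hta : t < a)
    (h1 : IsCurveIntegral ν y t a L₁) (h2 : IsCurveIntegral ν y s a L₂) :
    IsCurveIntegral ν y s t (L₂ - L₁) := by
  intro ε hε
  obtain ⟨δ₁, hδ₁, H1⟩ := h1 (ε / 2) (half_pos hε)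
  obtain ⟨δ₂, hδ₂, H2⟩ := h2 (ε / 2) (half_pos hε)
  refine ⟨δ₂, hδ₂, fun Q hQ => ?_⟩
  obtain ⟨P, hP⟩ := TaggedPartition.exists_mesh hta (lt_min hδ₁ hδ₂)
  have A := H1 P (hP.mono (min_le_left _ _))
  have B := H2 (Q.concat P) (TaggedPartition.concat_mesh hQ (hP.mono (min_le_right _ _)))
  rw [RiemannSum_concat] at B
  rw [abs_lt] at A B ⊢
  constructor <;> linarith [A.1, A.2, B.1, B.2]

end

lemma tele_bound (n : ℕ) (A B R : ℕ → ℝ) (c : ℝ)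
    (h : ∀ i < n, |(A (i + 1) - A i) - R i| ≤ c * (B (i + 1) - B i)) :
    |(A n - A 0) - ∑ i ∈ Finset.range n, R i| ≤ c * (B n - B 0) := by
  rw [← Finset.sum_range_sub A, ← Finset.sum_range_sub B, ← Finset.sum_sub_distrib,
    Finset.mul_sum]
  exact (Finset.abs_sum_le_sum_abs _ _).trans
    (Finset.sum_le_sum fun i hi => h i (Finset.mem_range.1 hi))

section conc2
variable {N : ℕ} {νbar : Fin N → EuclideanSpace ℝ (Fin N) → Set ℝ → ℝ} {mB lB : ℕ → Measure ℝ}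

lemma GS.curve (hν : IsNDimParamBMeasure νbar mB lB) {y : ℝ → EuclideanSpace ℝ (Fin N)}
    {a b : ℝ} (hab : a ≤ b) (h : GS (FF νbar) (GG N mB lB) y (Set.Icc a b)) (i : Fin N) :
    IsCurveIntegral (νbar i) y a b (y b i - y a i) := by
  intro ε hε
  obtain ⟨j, hj, hb⟩ := bound_aux h.1
  have hG := gen_conc hν
  have D : 0 ≤ GG N mB lB j b - GG N mB lB j a := sub_nonneg.2 (hG.mono j hj hab)
  set η := ε / (GG N mB lB j b - GG N mB lB j a + 1) with hη
  have hηp : 0 < η := by positivity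
  obtain ⟨δ, hδ, H⟩ := unif_aux h.1 hηp
  refine ⟨δ, hδ, fun P hP => ?_⟩
  have T := tele_bound P.k (fun k => y (P.t k) i) (fun k => GG N mB lB j (P.t k))
    (fun k => νbar i (y (P.tag k)) (Set.Icc (P.t k) (P.t (k + 1)))) η (by
      intro k hk
      have m1 := P.t_mem (p := k) (by omega)
      have m2 := P.t_mem (p := k + 1) (by omega)
      have m3 := P.tag_mem k hk
      have lt := P.lt k hk
      have ms := hP k hk
      have m4 : P.tag k ∈ Set.Icc a b := ⟨m1.1.trans m3.1, m3.2.trans m2.2⟩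
      have A := h.2 j hj _ m1 _ m2 lt.le (y (P.tag k)) (hb _ m4) η (fun r hr => by
        have mr : r ∈ Set.Icc a b := ⟨m1.1.trans hr.1, hr.2.trans m2.2⟩
        refine ⟨hb r mr, (H r mr _ m4 ?_).le⟩
        rw [abs_le]
        constructor <;> linarith [hr.1, hr.2, m3.1, m3.2])
      refine le_trans ?_ A
      have B := comp_le_norm (y (P.t (k + 1)) - y (P.t k) -
        (FF νbar (y (P.tag k)) (P.t (k + 1)) - FF νbar (y (P.tag k)) (P.t k))) i
      rw [PiLp.sub_apply, FF_sub hν _ i lt.le, PiLp.sub_apply] at B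
      rw [(hν.1 i _).Icc_eq lt.le]
      exact B)
  simp only [P.left, P.right] at T
  refine lt_of_le_of_lt T ?_
  rw [hη, div_mul_eq_mul_div, div_lt_iff₀ (by positivity)]
  nlinarith

lemma curve_est (hν : IsNDimParamBMeasure νbar mB lB) {y : ℝ → EuclideanSpace ℝ (Fin N)}
    {a b L : ℝ} (hab : a < b) {i : Fin N} (h : IsCurveIntegral (νbar i) y a b L)
    {j : ℕ} (hj : 1 ≤ j) {v : EuclideanSpace ℝ (Fin N)} (hv : ‖v‖ ≤ (j : ℝ)) {ω : ℝ}
    (hω : ∀ r ∈ Set.Icc a b, ‖y r‖ ≤ (j : ℝ) ∧ ‖y r - v‖ ≤ ω) :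
    |L - νbar i v (Set.Ioc a b)| ≤ ω * (gg mB lB j b - gg mB lB j a) := by
  refine le_of_forall_pos_le_add fun ε hε => ?_
  obtain ⟨δ, hδ, H⟩ := h ε hε
  obtain ⟨P, hP⟩ := TaggedPartition.exists_mesh hab hδ
  have A := H P hP
  have T := tele_bound P.k (fun k => prim (νbar i v) (P.t k)) (fun k => gg mB lB j (P.t k))
    (fun k => νbar i (y (P.tag k)) (Set.Icc (P.t k) (P.t (k + 1)))) ω (by
      intro k hk
      have m1 := P.t_mem (p := k) (by omega)
      have m2 := P.t_mem (p := k + 1) (by omega)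
      have m3 := P.tag_mem k hk
      have lt := P.lt k hk
      have m4 : P.tag k ∈ Set.Icc a b := ⟨m1.1.trans m3.1, m3.2.trans m2.2⟩
      rw [(hν.1 i _).Icc_eq lt.le, (hν.1 i v).prim_sub lt.le, abs_sub_comm]
      refine (gg_b2 hν hj (hω _ m4).1 hv i lt.le).trans ?_
      exact mul_le_mul_of_nonneg_right (hω _ m4).2 (sub_nonneg.2 (gg_mono hν hj lt.le)))
  simp only [P.left, P.right, (hν.1 i v).prim_sub hab.le] at T
  have e : L - νbar i v (Set.Ioc a b) = (L - RiemannSum (νbar i) y P) -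
    (νbar i v (Set.Ioc a b) - RiemannSum (νbar i) y P) := by ring
  rw [e]
  refine (abs_sub _ _).trans ?_
  unfold RiemannSum at *
  linarith

lemma sol_of_GS (hν : IsNDimParamBMeasure νbar mB lB) {y : ℝ → EuclideanSpace ℝ (Fin N)}
    {S : Set ℝ} (hS : S.OrdConnected) {t₀ : ℝ} (h0 : t₀ ∈ S)
    (h : GS (FF νbar) (GG N mB lB) y S) : IsSolutionOn νbar t₀ (y t₀) S y := by
  refine ⟨h0, rfl, h.1, fun t ht i => ?_⟩
  rcases le_or_gt t₀ t with hle | hlt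
  · exact Or.inl ⟨hle, (h.mono (hS.out h0 ht)).curve hν hle i⟩
  · refine Or.inr ⟨hlt, ?_⟩
    rw [neg_sub]
    exact (h.mono (hS.out ht h0)).curve hν hlt.le i

lemma GS_of_sol (hν : IsNDimParamBMeasure νbar mB lB) {y : ℝ → EuclideanSpace ℝ (Fin N)}
    {S : Set ℝ} (hS : S.OrdConnected) {t₀ : ℝ} {y₀ : EuclideanSpace ℝ (Fin N)}
    (h : IsSolutionOn νbar t₀ y₀ S y) : GS (FF νbar) (GG N mB lB) y S := by
  obtain ⟨h0, hy0, hc, hI⟩ := h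
  subst hy0
  -- integrals over arbitrary subintervals lying on one side of t₀
  have right : ∀ s ∈ S, ∀ t ∈ S, t₀ ≤ s → s < t → ∀ i,
      IsCurveIntegral (νbar i) y s t (y t i - y s i) := by
    intro s hs t ht h1 h2 i
    have A : IsCurveIntegral (νbar i) y t₀ t (y t i - y t₀ i) := by
      rcases hI t ht i with h | h
      · exact h.2
      · exact absurd h.1 (by linarith)
    rcases h1.eq_or_lt with e | h1
    · subst e; exact A
    have B : IsCurveIntegral (νbar i) y t₀ s (y s i - y t₀ i) := by
      rcases hI s hs i with h | h
      · exact h.2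
      · exact absurd h.1 (by linarith)
    have := B.sub_left h1 A
    simpa using this
  have left : ∀ s ∈ S, ∀ t ∈ S, t ≤ t₀ → s < t → ∀ i,
      IsCurveIntegral (νbar i) y s t (y t i - y s i) := by
    intro s hs t ht h1 h2 i
    have A : IsCurveIntegral (νbar i) y s t₀ (-(y s i - y t₀ i)) := by
      rcases hI s hs i with h | h
      · exact absurd h.1 (by linarith)
      · exact h.2
    rcases h1.eq_or_lt with e | h1
    · subst e; simpa using A
    have B : IsCurveIntegral (νbar i) y t t₀ (-(y t i - y t₀ i)) := by
      rcases hI t ht i with h | h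
      · exact absurd h.1 (by linarith)
      · exact h.2
    have := B.sub_right h1 A
    have e : -(y s i - y t₀ i) - -(y t i - y t₀ i) = y t i - y s i := by ring
    rwa [e] at this
  have est : ∀ j : ℕ, 1 ≤ j → ∀ s ∈ S, ∀ t ∈ S, s ≤ t → (t₀ ≤ s ∨ t ≤ t₀) →
      ∀ v : EuclideanSpace ℝ (Fin N), ‖v‖ ≤ (j : ℝ) →
      ∀ ω : ℝ, (∀ r ∈ Set.Icc s t, ‖y r‖ ≤ (j : ℝ) ∧ ‖y r - v‖ ≤ ω) →
      ‖y t - y s - (FF νbar v t - FF νbar v s)‖ ≤ ω * (GG N mB lB j t - GG N mB lB j s) := by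
    intro j hj s hs t ht hst hside v hv ω hω
    rcases hst.eq_or_lt with e | hlt
    · subst e; simp
    have hint : ∀ i, IsCurveIntegral (νbar i) y s t (y t i - y s i) := fun i => by
      rcases hside with h | h
      · exact right s hs t ht h hlt i
      · exact left s hs t ht h hlt i
    unfold GG
    rw [← mul_sub, mul_left_comm]
    refine norm_comp_le fun i => ?_
    rw [PiLp.sub_apply, FF_sub hν v i hst, PiLp.sub_apply]
    exact curve_est hν hlt (hint i) hj hv hω
  refine ⟨hc, fun j hj s hs t ht hst v hv ω hω => ?_⟩
  rcases le_total t₀ s with h1 | h1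
  · exact est j hj s hs t ht hst (Or.inl h1) v hv ω hω
  rcases le_total t t₀ with h2 | h2
  · exact est j hj s hs t ht hst (Or.inr h2) v hv ω hω
  have A := est j hj s hs t₀ h0 h1 (Or.inr le_rfl) v hv ω
    (fun r hr => hω r ⟨hr.1, hr.2.trans h2⟩)
  have B := est j hj t₀ h0 t ht h2 (Or.inl le_rfl) v hv ω
    (fun r hr => hω r ⟨h1.trans hr.1, hr.2⟩)
  have e : y t - y s - (FF νbar v t - FF νbar v s) =
    (y t₀ - y s - (FF νbar v t₀ - FF νbar v s)) +
    (y t - y t₀ - (FF νbar v t - FF νbar v t₀)) := by abel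
  rw [e]
  refine (norm_add_le _ _).trans ?_
  linarith

end conc2

theorem stmt16 {N : ℕ} (νbar : Fin N → EuclideanSpace ℝ (Fin N) → Set ℝ → ℝ)
    (mB lB : ℕ → Measure ℝ) (hν : IsNDimParamBMeasure νbar mB lB)
    (t₀ : ℝ) (y₀ : EuclideanSpace ℝ (Fin N)) :
    ∃ (S : Set ℝ) (y : ℝ → EuclideanSpace ℝ (Fin N)),
      IsMaximalSolution νbar t₀ y₀ S y ∧
      (BddAbove S → Tendsto (fun t => ‖y t‖) (𝓝[<] (sSup S)) atTop) ∧
      (BddBelow S → Tendsto (fun t => ‖y t‖) (𝓝[>] (sInf S)) atTop) := by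
  obtain ⟨S, y, h0, hy0, hord, hopen, hGS, hmax, hU, hL⟩ := max_exists (gen_conc hν) t₀ y₀
  subst hy0
  refine ⟨S, y, ⟨sol_of_GS hν hord h0 hGS, hopen, hord, ?_⟩, hU, hL⟩
  intro S' hS' z hz
  exact hmax S' hS' hz.1 z hz.2.1 (GS_of_sol hν hS' hz)
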